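/- Let k : ℕ → ℕ be any sequence with 1 < k(n) < n for all n ≥ 4, and set X_n := {θ ∈ ℝ/ℤ : (−2)^{n−1}·θ = (−2)^{k(n)−1}·θ and (−2)^{n−k(n)}·θ ≠ θ}. Then each X_n is a nonempty finite set and the uniform probability measures ν_n := (1/Card(X_n)) · Σ_{θ ∈ X_n} δ_θ converge weakly to the Haar probability measure λ on ℝ/ℤ as n → ∞. -/

import Mathlib

open MeasureTheory Filter Topology
open scoped ENNReal

/-- The uniform probability measure on a (nonempty finite) subset `S` of a measurable
space: `(1/Card S) · Σ_{x ∈ S} δ_x`. -/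
noncomputable def uniformOn {X : Type*} [MeasurableSpace X] (S : Set X) : Measure X :=
  (Nat.card S : ℝ≥0∞)⁻¹ • Measure.sum (fun x : S => Measure.dirac (x : X))

/-- Weak convergence of a sequence of measures: convergence of integrals of every
bounded continuous real-valued function. -/
def WeakTendsto {X : Type*} [TopologicalSpace X] [MeasurableSpace X]
    (μ : ℕ → Measure X) (ν : Measure X) : Prop :=
  ∀ g : BoundedContinuousFunction X ℝ,
    Tendsto (fun n => ∫ x, g x ∂(μ n)) atTop (𝓝 (∫ x, g x ∂ν))

/- By Weyl's criterion it is enough that, for each fixed `m ≠ 0`, the average of the character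
`fourier m` over the `n`-th set tends to `0`. With `p = k - 1` and `q = n - k`, that set is a
difference of two torsion subgroups of the circle, of orders `|b ^ p (b ^ q - 1)|` and
`|b ^ q - 1|` for the base `b = -2`. The sum of a character over the `N`-torsion subgroup vanishes
unless `N ∣ m`, in which case it equals `|N| ≤ |m|`. The exponential sums are thus bounded by
`2 |m|`, while the number of angles grows like `|b| ^ n`. -/

section UniformMeasure

variable {X : Type*} [MeasurableSpace X] {S : Set X}

theorem isProbabilityMeasure_uniformOn (hS : S.Finite) (hne : S.Nonempty) :
    IsProbabilityMeasure (uniformOn S) := by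
  have := hS.fintype
  have hcard : (S.ncard : ℝ≥0∞) ≠ 0 :=
    Nat.cast_ne_zero.2 ((Set.ncard_pos hS).2 hne).ne'
  constructor
  simp [uniformOn, Measure.sum_fintype, ENNReal.inv_mul_cancel hcard]

theorem integral_uniformOn [MeasurableSingletonClass X] {E : Type*} [NormedAddCommGroup E]
    [NormedSpace ℝ E] [CompleteSpace E] (hS : S.Finite) (g : X → E) :
    ∫ x, g x ∂(uniformOn S) = (S.ncard : ℝ)⁻¹ • ∑ᶠ x ∈ S, g x := by
  have := hS.fintype
  have hint (x : S) : Integrable g (Measure.dirac (x : X)) := integrable_dirac (by simp)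
  rw [uniformOn, integral_smul_measure, Measure.sum_fintype,
    integral_finsetSum_measure fun x _ => hint x, ← finsum_set_coe_eq_finsum_mem,
    finsum_eq_sum_of_fintype]
  simp

end UniformMeasure

theorem WeakTendsto.congr' {X : Type*} [TopologicalSpace X] [MeasurableSpace X]
    {μ₁ μ₂ : ℕ → Measure X} {ν : Measure X} (h : WeakTendsto μ₁ ν) (hμ : μ₁ =ᶠ[atTop] μ₂) :
    WeakTendsto μ₂ ν := fun g =>
  (h g).congr' (hμ.mono fun n hn => by simp only [hn])

theorem tendsto_integral_of_mem_span {X 𝕜 ι : Type*} [TopologicalSpace X] [CompactSpace X]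
    [MeasurableSpace X] [OpensMeasurableSpace X] [RCLike 𝕜] {l : Filter ι}
    {μ : ι → Measure X} [∀ i, IsFiniteMeasure (μ i)] {ν : Measure X} [IsFiniteMeasure ν]
    {F : Set C(X, 𝕜)} (hF : ∀ f ∈ F, Tendsto (fun i => ∫ x, f x ∂(μ i)) l (𝓝 (∫ x, f x ∂ν)))
    {f : C(X, 𝕜)} (hf : f ∈ Submodule.span 𝕜 F) :
    Tendsto (fun i => ∫ x, f x ∂(μ i)) l (𝓝 (∫ x, f x ∂ν)) := by
  have integrable (ρ : Measure X) [IsFiniteMeasure ρ] (g : C(X, 𝕜)) : Integrable g ρ :=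
    BoundedContinuousFunction.integrable ρ (.mkOfCompact g)
  induction hf using Submodule.span_induction with
  | mem f hf => exact hF f hf
  | zero => simpa using tendsto_const_nhds
  | add f g _ _ hf hg =>
    simpa only [ContinuousMap.coe_add, Pi.add_apply, integral_add (integrable _ f) (integrable _ g)]
      using hf.add hg
  | smul c f _ hf =>
    simpa only [ContinuousMap.coe_smul, Pi.smul_apply, integral_smul] using hf.const_smul c

open AddCircle Submodule

section WeylCriterion

variable {T : ℝ} [hT : Fact (0 < T)]

theorem tendsto_probabilityMeasure_of_tendsto_integral_fourier {ι : Type*} {l : Filter ι}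
    {μ : ι → ProbabilityMeasure (AddCircle T)} {ν : ProbabilityMeasure (AddCircle T)}
    (h : ∀ m : ℤ, Tendsto (fun i => ∫ x, fourier m x ∂(μ i : Measure (AddCircle T))) l
      (𝓝 (∫ x, fourier m x ∂(ν : Measure (AddCircle T))))) :
    Tendsto μ l (𝓝 ν) := by
  let toC := BoundedContinuousFunction.toContinuousMapStarₐ (α := AddCircle T) (β := ℂ) ℂ
  refine ProbabilityMeasure.tendsto_of_tight_of_separatesPoints ℂ .of_compactSpace
    (A := fourierSubalgebra.comap toC) ?_ fun g hg => ?_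
  · intro x y hxy
    obtain ⟨_, ⟨f, hf, rfl⟩, hfxy⟩ := fourierSubalgebra_separatesPoints hxy
    exact ⟨f, ⟨f, ⟨.mkOfCompact f, hf, rfl⟩, rfl⟩, hfxy⟩
  · have hspan : toC g ∈ span ℂ (Set.range (@fourier T)) := by
      rwa [← fourierSubalgebra_coe]
    exact tendsto_integral_of_mem_span (Set.forall_mem_range.2 h) hspan

theorem integral_fourier_haarAddCircle_of_ne_zero {m : ℤ} (hm : m ≠ 0) :
    ∫ x : AddCircle T, fourier m x ∂haarAddCircle = 0 :=
  integral_eq_zero_of_add_right_eq_neg (fourier_add_half_inv_index hm hT.out)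

theorem weakTendsto_haarAddCircle_of_tendsto_integral_fourier {μ : ℕ → Measure (AddCircle T)}
    (hμ : ∀ᶠ n in atTop, IsProbabilityMeasure (μ n))
    (h : ∀ m : ℤ, m ≠ 0 → Tendsto (fun n => ∫ x, fourier m x ∂(μ n)) atTop (𝓝 0)) :
    WeakTendsto μ haarAddCircle := by
  obtain ⟨N, hN⟩ := eventually_atTop.1 hμ
  let ν (n : ℕ) : ProbabilityMeasure (AddCircle T) := ⟨μ (n + N), hN _ (Nat.le_add_left N n)⟩
  suffices hν : Tendsto ν atTop (𝓝 ⟨haarAddCircle, inferInstance⟩) from fun g =>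
    (tendsto_add_atTop_iff_nat N).1 (ProbabilityMeasure.tendsto_iff_forall_integral_tendsto.1 hν g)
  refine tendsto_probabilityMeasure_of_tendsto_integral_fourier fun m => ?_
  rcases eq_or_ne m 0 with rfl | hm
  · simp
  · rw [ProbabilityMeasure.coe_mk, integral_fourier_haarAddCircle_of_ne_zero hm]
    exact (tendsto_add_atTop_iff_nat N).2 (h m hm)

theorem weakTendsto_uniformOn_of_norm_finsum_fourier_le {S : ℕ → Set (AddCircle T)}
    (hcard : Tendsto (fun n => (S n).ncard) atTop atTop) {C : ℤ → ℝ}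
    (hC : ∀ m : ℤ, m ≠ 0 → ∀ᶠ n in atTop, ‖∑ᶠ θ ∈ S n, fourier m θ‖ ≤ C m) :
    WeakTendsto (fun n => uniformOn (S n)) haarAddCircle := by
  have hpos : ∀ᶠ n in atTop, 0 < (S n).ncard := hcard.eventually_gt_atTop 0
  refine weakTendsto_haarAddCircle_of_tendsto_integral_fourier ?_ fun m hm => ?_
  · filter_upwards [hpos] with n hn
    exact isProbabilityMeasure_uniformOn (Set.finite_of_ncard_pos hn)
      (Set.nonempty_of_ncard_ne_zero hn.ne')
  · have hlim : Tendsto (fun n => C m / (S n).ncard) atTop (𝓝 0) :=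
      (tendsto_natCast_atTop_atTop.comp hcard).const_div_atTop (C m)
    refine squeeze_zero_norm' ?_ hlim
    filter_upwards [hpos, hC m hm] with n hn hCn
    rw [integral_uniformOn (Set.finite_of_ncard_pos hn), norm_smul, norm_inv, Real.norm_natCast,
      inv_mul_eq_div]
    gcongr

end WeylCriterion

theorem finsum_mem_addChar_eq_zero {A R : Type*} [AddGroup A] [CommSemiring R] [IsDomain R]
    {H : AddSubgroup A} (hH : (H : Set A).Finite) {ψ : AddChar A R} {a : A} (ha : a ∈ H)
    (hψ : ψ a ≠ 1) : ∑ᶠ x ∈ H, ψ x = 0 := by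
  classical
  have : Fintype H := hH.fintype
  have hne : ψ.compAddMonoidHom H.subtype ≠ 0 := fun h =>
    hψ (by simpa using DFunLike.congr_fun h ⟨a, ha⟩)
  calc ∑ᶠ x ∈ H, ψ x = ∑ᶠ x : H, ψ x := (finsum_set_coe_eq_finsum_mem (H : Set A)).symm
    _ = ∑ x : H, ψ.compAddMonoidHom H.subtype x := finsum_eq_sum_of_fintype _
    _ = 0 := by rw [AddChar.sum_eq_ite, if_neg hne]

/-- The monomial `fourier m` as an additive character, so that orthogonality of characters on finite
subgroups applies to it. -/
noncomputable def fourierAddChar (T : ℝ) (m : ℤ) : AddChar (AddCircle T) ℂ where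
  toFun := fourier m
  map_zero_eq_one' := fourier_eval_zero m
  map_add_eq_mul' x y := by simp only [fourier_apply, smul_add, toCircle_add, Circle.coe_mul]

theorem fourier_eq_one_iff {T : ℝ} (hT : T ≠ 0) {m : ℤ} {x : AddCircle T} :
    fourier m x = 1 ↔ m • x = 0 := by
  rw [fourier_apply, Circle.coe_eq_one, ← toCircle_zero (T := T), (injective_toCircle hT).eq_iff]

theorem torsionBy_subset_torsionBy_mul {R M : Type*} [CommSemiring R] [AddCommMonoid M]
    [Module R M] (a c : R) : (torsionBy R M c : Set M) ⊆ torsionBy R M (a * c) :=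
  torsionBy_le_torsionBy_of_dvd _ _ (dvd_mul_left c a)

section Torsion

variable {T : ℝ} {N m : ℤ}

theorem encard_torsionBy_addCircle_le (hN : N ≠ 0) :
    (torsionBy ℤ (AddCircle T) N : Set (AddCircle T)).encard ≤ N.natAbs :=
  card_torsion_le_of_isSMulRegular_int T N hN
    (.of_right_eq_zero_of_smul fun x hx => by simpa [hN] using hx)

theorem finite_torsionBy_addCircle (hN : N ≠ 0) :
    (torsionBy ℤ (AddCircle T) N : Set (AddCircle T)).Finite :=
  Set.finite_of_encard_le_coe (encard_torsionBy_addCircle_le hN)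

variable [hT : Fact (0 < T)]

theorem addOrderOf_period_div_natAbs (hN : N ≠ 0) :
    addOrderOf ((T / N.natAbs : ℝ) : AddCircle T) = N.natAbs :=
  addOrderOf_period_div (Int.natAbs_pos.2 hN)

theorem zsmul_period_div_natAbs_eq_zero_iff (hN : N ≠ 0) :
    m • ((T / N.natAbs : ℝ) : AddCircle T) = 0 ↔ N ∣ m := by
  rw [← addOrderOf_dvd_iff_zsmul_eq_zero, addOrderOf_period_div_natAbs hN, Int.natAbs_dvd]

theorem period_div_natAbs_mem_torsionBy (hN : N ≠ 0) :
    ((T / N.natAbs : ℝ) : AddCircle T) ∈ torsionBy ℤ (AddCircle T) N :=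
  (mem_torsionBy_iff _ _).2 ((zsmul_period_div_natAbs_eq_zero_iff hN).2 dvd_rfl)

theorem ncard_torsionBy_addCircle (hN : N ≠ 0) :
    (torsionBy ℤ (AddCircle T) N : Set (AddCircle T)).ncard = N.natAbs := by
  refine le_antisymm (ENat.toNat_le_of_le_natCast (encard_torsionBy_addCircle_le hN)) ?_
  have := (finite_torsionBy_addCircle (T := T) hN).to_subtype
  have hdvd := (torsionBy ℤ (AddCircle T) N).toAddSubgroup.addOrderOf_dvd_natCard
    (period_div_natAbs_mem_torsionBy hN)
  rw [addOrderOf_period_div_natAbs hN] at hdvd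
  exact Nat.le_of_dvd Nat.card_pos hdvd

theorem finsum_mem_torsionBy_fourier_of_dvd (hN : N ≠ 0) (hdvd : N ∣ m) :
    ∑ᶠ θ ∈ torsionBy ℤ (AddCircle T) N, fourier m θ = N.natAbs := by
  have hone : ∀ θ ∈ torsionBy ℤ (AddCircle T) N, fourier m θ = 1 := fun θ hθ =>
    (fourier_eq_one_iff hT.out.ne').2 (torsionBy_le_torsionBy_of_dvd N m hdvd hθ)
  calc ∑ᶠ θ ∈ torsionBy ℤ (AddCircle T) N, fourier m θ
      = ∑ᶠ θ ∈ (torsionBy ℤ (AddCircle T) N : Set (AddCircle T)), ((1 : ℕ) : ℂ) :=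
        finsum_mem_congr rfl fun θ hθ => by rw [hone θ hθ, Nat.cast_one]
    _ = N.natAbs := by
      rw [← Nat.cast_finsum_mem (finite_torsionBy_addCircle hN), finsum_one,
        ncard_torsionBy_addCircle hN]

theorem finsum_mem_torsionBy_fourier_of_not_dvd (hN : N ≠ 0) (hdvd : ¬N ∣ m) :
    ∑ᶠ θ ∈ torsionBy ℤ (AddCircle T) N, fourier m θ = 0 := by
  have hne : fourierAddChar T m (T / N.natAbs : ℝ) ≠ 1 := fun h =>
    hdvd ((zsmul_period_div_natAbs_eq_zero_iff hN).1 ((fourier_eq_one_iff hT.out.ne').1 h))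
  exact finsum_mem_addChar_eq_zero (H := (torsionBy ℤ (AddCircle T) N).toAddSubgroup)
    (finite_torsionBy_addCircle hN) (period_div_natAbs_mem_torsionBy hN) hne

theorem norm_finsum_mem_torsionBy_fourier_le (hN : N ≠ 0) (hm : m ≠ 0) :
    ‖∑ᶠ θ ∈ torsionBy ℤ (AddCircle T) N, fourier m θ‖ ≤ |m| := by
  by_cases hdvd : N ∣ m
  · rw [finsum_mem_torsionBy_fourier_of_dvd hN hdvd, Complex.norm_natCast, ← Nat.cast_natAbs]
    exact_mod_cast Int.natAbs_le_of_dvd_ne_zero hdvd hm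
  · rw [finsum_mem_torsionBy_fourier_of_not_dvd hN hdvd, norm_zero]
    positivity

end Torsion

theorem pow_ne_one_of_one_lt_natAbs {b : ℤ} (hb : 1 < b.natAbs) {q : ℕ} (hq : q ≠ 0) :
    b ^ q ≠ 1 := fun h =>
  (Nat.one_lt_pow hq hb).ne' (by rw [← Int.natAbs_pow, h, Int.natAbs_one])

theorem natAbs_pow_le_two_mul_natAbs_pow_sub_one {b : ℤ} (hb : 1 < b.natAbs) {q : ℕ}
    (hq : q ≠ 0) : b.natAbs ^ q ≤ 2 * (b ^ q - 1).natAbs := by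
  have htwo : 2 ≤ (b ^ q).natAbs := Int.natAbs_pow b q ▸ hb.trans_le (Nat.le_self_pow hq _)
  rw [← Int.natAbs_pow]
  omega

/-- The angles that multiplication by `b` brings after `p` steps to an angle fixed by `b ^ q`, but
that are not fixed by `b ^ q` themselves. The paper's `X_n` has `b = -2`, `p = k n - 1` and
`q = n - k n`. -/
def preperiodicAngles (T : ℝ) (b : ℤ) (p q : ℕ) : Set (AddCircle T) :=
  {θ | b ^ (p + q) • θ = b ^ p • θ ∧ b ^ q • θ ≠ θ}

section Preperiodic

variable {T : ℝ} {b : ℤ} {p q : ℕ}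

theorem preperiodicAngles_eq_sdiff_torsionBy :
    preperiodicAngles T b p q =
      (torsionBy ℤ (AddCircle T) (b ^ p * (b ^ q - 1)) : Set (AddCircle T)) \
        torsionBy ℤ (AddCircle T) (b ^ q - 1) := by
  ext θ
  simp only [preperiodicAngles, Set.mem_ofPred_eq, Set.mem_sdiff, SetLike.mem_coe,
    mem_torsionBy_iff, mul_sub, mul_one, ← pow_add, sub_smul, one_smul, sub_eq_zero, ne_eq]

variable [Fact (0 < T)]

theorem ncard_preperiodicAngles (hb : b ≠ 0) (hq : b ^ q ≠ 1) :
    (preperiodicAngles T b p q).ncard = (b.natAbs ^ p - 1) * (b ^ q - 1).natAbs := by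
  have hM : b ^ q - 1 ≠ 0 := sub_ne_zero.2 hq
  rw [preperiodicAngles_eq_sdiff_torsionBy,
    Set.ncard_sdiff (torsionBy_subset_torsionBy_mul _ _) (finite_torsionBy_addCircle hM),
    ncard_torsionBy_addCircle (mul_ne_zero (pow_ne_zero p hb) hM), ncard_torsionBy_addCircle hM,
    Int.natAbs_mul, Int.natAbs_pow, Nat.sub_one_mul]

theorem norm_finsum_mem_preperiodicAngles_fourier_le (hb : b ≠ 0) (hq : b ^ q ≠ 1) {m : ℤ}
    (hm : m ≠ 0) : ‖∑ᶠ θ ∈ preperiodicAngles T b p q, fourier m θ‖ ≤ 2 * |m| := by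
  have hM : b ^ q - 1 ≠ 0 := sub_ne_zero.2 hq
  have hN : b ^ p * (b ^ q - 1) ≠ 0 := mul_ne_zero (pow_ne_zero p hb) hM
  have hsum := finsum_mem_add_sdiff (f := fourier (T := T) m)
    (torsionBy_subset_torsionBy_mul (b ^ p) (b ^ q - 1)) (finite_torsionBy_addCircle hN)
  rw [preperiodicAngles_eq_sdiff_torsionBy, ← sub_eq_of_eq_add' hsum.symm, two_mul]
  exact norm_sub_le_of_le (norm_finsum_mem_torsionBy_fourier_le hN hm)
    (norm_finsum_mem_torsionBy_fourier_le hM hm)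

theorem natAbs_pow_le_four_mul_ncard_preperiodicAngles (hb : 1 < b.natAbs) (hp : p ≠ 0)
    (hq : q ≠ 0) : b.natAbs ^ (p + q) ≤ 4 * (preperiodicAngles T b p q).ncard := by
  have hp' : b.natAbs ^ p ≤ 2 * (b.natAbs ^ p - 1) := by
    have := Nat.le_self_pow hp b.natAbs
    omega
  calc b.natAbs ^ (p + q) = b.natAbs ^ p * b.natAbs ^ q := pow_add _ _ _
    _ ≤ 2 * (b.natAbs ^ p - 1) * (2 * (b ^ q - 1).natAbs) :=
      Nat.mul_le_mul hp' (natAbs_pow_le_two_mul_natAbs_pow_sub_one hb hq)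
    _ = 4 * (preperiodicAngles T b p q).ncard := by
      rw [ncard_preperiodicAngles (Int.natAbs_pos.1 (zero_lt_one.trans hb))
        (pow_ne_one_of_one_lt_natAbs hb hq)]
      ring

theorem ncard_preperiodicAngles_pos (hb : 1 < b.natAbs) (hp : p ≠ 0) (hq : q ≠ 0) :
    0 < (preperiodicAngles T b p q).ncard := by
  have := Nat.pow_pos (n := p + q) (zero_lt_one.trans hb)
  have := natAbs_pow_le_four_mul_ncard_preperiodicAngles (T := T) hb hp hq
  omega

theorem tendsto_ncard_preperiodicAngles (hb : 1 < b.natAbs) {p q : ℕ → ℕ}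
    (hp : ∀ᶠ n in atTop, p n ≠ 0) (hq : ∀ᶠ n in atTop, q n ≠ 0)
    (hpq : Tendsto (fun n => p n + q n) atTop atTop) :
    Tendsto (fun n => (preperiodicAngles T b (p n) (q n)).ncard) atTop atTop := by
  refine tendsto_atTop.2 fun c => ?_
  filter_upwards [hp, hq, hpq.eventually_ge_atTop (4 * c)] with n hpn hqn hc
  have hlt : p n + q n < b.natAbs ^ (p n + q n) := Nat.lt_pow_self hb
  have := natAbs_pow_le_four_mul_ncard_preperiodicAngles (T := T) hb hpn hqn
  omega

theorem weakTendsto_uniformOn_preperiodicAngles (hb : 1 < b.natAbs) {p q : ℕ → ℕ}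
    (hp : ∀ᶠ n in atTop, p n ≠ 0) (hq : ∀ᶠ n in atTop, q n ≠ 0)
    (hpq : Tendsto (fun n => p n + q n) atTop atTop) :
    WeakTendsto (fun n => uniformOn (preperiodicAngles T b (p n) (q n))) haarAddCircle := by
  refine weakTendsto_uniformOn_of_norm_finsum_fourier_le
    (tendsto_ncard_preperiodicAngles hb hp hq hpq) (C := fun m => 2 * |m|) fun m hm => ?_
  filter_upwards [hq] with n hqn
  exact norm_finsum_mem_preperiodicAngles_fourier_le (Int.natAbs_pos.1 (zero_lt_one.trans hb))
    (pow_ne_one_of_one_lt_natAbs hb hqn) hm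

end Preperiodic

theorem antiholomorphic_misiurewicz_angles_equidistribute_general {T : ℝ} [Fact (0 < T)] {b : ℤ}
    (hb : 1 < b.natAbs) {n₀ : ℕ} (k : ℕ → ℕ) (hk : ∀ n, n₀ ≤ n → 1 < k n ∧ k n < n)
    (X : ℕ → Set (AddCircle T))
    (hX : ∀ n, X n = {θ : AddCircle T |
      b ^ (n - 1) • θ = b ^ (k n - 1) • θ ∧ b ^ (n - k n) • θ ≠ θ}) :
    (∀ n, n₀ ≤ n → (X n).Finite ∧ (X n).Nonempty) ∧
      WeakTendsto (fun n => uniformOn (X n)) haarAddCircle := by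
  have hpre (n : ℕ) (hn : n₀ ≤ n) : X n = preperiodicAngles T b (k n - 1) (n - k n) := by
    have : k n - 1 + (n - k n) = n - 1 := by have := hk n hn; omega
    rw [hX, preperiodicAngles, this]
  have hp (n : ℕ) (hn : n₀ ≤ n) : k n - 1 ≠ 0 := Nat.sub_ne_zero_of_lt (hk n hn).1
  have hq (n : ℕ) (hn : n₀ ≤ n) : n - k n ≠ 0 := Nat.sub_ne_zero_of_lt (hk n hn).2
  refine ⟨fun n hn => ?_, ?_⟩
  · have hpos := ncard_preperiodicAngles_pos (T := T) hb (hp n hn) (hq n hn)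
    rw [hpre n hn]
    exact ⟨Set.finite_of_ncard_pos hpos, Set.nonempty_of_ncard_ne_zero hpos.ne'⟩
  · have hpq : Tendsto (fun n => k n - 1 + (n - k n)) atTop atTop :=
      tendsto_atTop_mono (fun n => by lia) (tendsto_sub_atTop_nat 1)
    refine (weakTendsto_uniformOn_preperiodicAngles hb ?_ ?_ hpq).congr' ?_
    · exact eventually_atTop.2 ⟨n₀, hp⟩
    · exact eventually_atTop.2 ⟨n₀, hq⟩
    · exact eventually_atTop.2 ⟨n₀, fun n hn => by simp only [hpre n hn]⟩

theorem volume_unitAddCircle_eq_haarAddCircle :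
    (volume : Measure UnitAddCircle) = haarAddCircle := by
  simp [volume_eq_smul_haarAddCircle]

/-- For any sequence `1 < k(n) < n` (for `n ≥ 4`), the sets
`X n = {θ ∈ ℝ/ℤ : (−2)^(n−1)·θ = (−2)^(k(n)−1)·θ, (−2)^(n−k(n))·θ ≠ θ}` are nonempty and
finite, and the uniform probability measures on them converge weakly to the Haar
probability measure on `ℝ/ℤ`. -/
theorem antiholomorphic_misiurewicz_angles_equidistribute
    (k : ℕ → ℕ) (hk : ∀ n, 4 ≤ n → 1 < k n ∧ k n < n)
    (X : ℕ → Set UnitAddCircle)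
    (hX : ∀ n, X n = {θ : UnitAddCircle |
        ((-2 : ℤ) ^ (n - 1)) • θ = ((-2 : ℤ) ^ (k n - 1)) • θ ∧
          ((-2 : ℤ) ^ (n - k n)) • θ ≠ θ}) :
    (∀ n, 4 ≤ n → (X n).Finite ∧ (X n).Nonempty) ∧
      WeakTendsto (fun n => uniformOn (X n)) (volume : Measure UnitAddCircle) := by
  exact volume_unitAddCircle_eq_haarAddCircle ▸
    antiholomorphic_misiurewicz_angles_equidistribute_general (by decide) k hk X hX
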